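/- Let k be a field of characteristic 0 and R = k[X_1, …, X_n] a polynomial ring with n ≥ 2, equipped with an ℕ-grading R = ⊕_{i∈ℕ} R_i such that each X_j is homogeneous and X_1 has positive degree. Let f be a homogeneous prime element of R such that f ∉ R_0[X_1]. Then: (a) R/(f − c)R is an integral domain for every c ∈ k; (b) if R/fR is rigid, then R/(f − c)R is rigid for every c ∈ k. -/

import Mathlib

set_option synthInstance.maxHeartbeats 400000

noncomputable section

/-- A derivation is locally nilpotent. -/
def IsLND {R : Type*} [CommRing R] (D : Derivation ℤ R R) : Prop :=
  ∀ b : R, ∃ n : ℕ, 0 < n ∧ (⇑D)^[n] b = 0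

open MvPolynomial

section Helpers

open Set

variable {σ k : Type*} [Field k]

/-- All monomials of `a` have weight in `T`. -/
def SuppIn (w : σ → ℕ) (T : Set ℤ) (a : MvPolynomial σ k) : Prop :=
  ∀ s, coeff s a ≠ 0 → ((Finsupp.weight w s : ℕ) : ℤ) ∈ T

namespace SuppIn

variable {w : σ → ℕ} {T T₁ T₂ : Set ℤ} {a b : MvPolynomial σ k}

lemma zero : SuppIn w T (0 : MvPolynomial σ k) := by
  intro s hs; simp at hs

lemma mono (h : SuppIn w T₁ a) (hT : T₁ ⊆ T₂) : SuppIn w T₂ a := fun s hs => hT (h s hs)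

lemma add (ha : SuppIn w T a) (hb : SuppIn w T b) : SuppIn w T (a + b) := by
  intro s hs
  by_cases h : coeff s a = 0
  · exact hb s (by simpa [h] using hs)
  · exact ha s h

lemma neg (ha : SuppIn w T a) : SuppIn w T (-a) := by
  intro s hs
  exact ha s (by simpa using hs)

lemma sub (ha : SuppIn w T a) (hb : SuppIn w T b) : SuppIn w T (a - b) := by
  rw [sub_eq_add_neg]; exact ha.add hb.neg

lemma sum {ι : Type*} (t : Finset ι) (g : ι → MvPolynomial σ k)
    (h : ∀ i ∈ t, SuppIn w T (g i)) : SuppIn w T (∑ i ∈ t, g i) := by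
  classical
  induction t using Finset.induction_on with
  | empty => simpa using zero
  | insert i t hi ih =>
    rw [Finset.sum_insert hi]
    exact (h i (by simp)).add (ih fun j hj => h j (by simp [hj]))

lemma mul (ha : SuppIn w T₁ a) (hb : SuppIn w T₂ b)
    (hT : ∀ x ∈ T₁, ∀ y ∈ T₂, x + y ∈ T) : SuppIn w T (a * b) := by
  classical
  intro s hs
  have := MvPolynomial.support_mul a b (mem_support_iff.mpr hs)
  obtain ⟨x, hx, y, hy, rfl⟩ := Finset.mem_add.mp this
  have := hT _ (ha x (mem_support_iff.mp hx)) _ (hb y (mem_support_iff.mp hy))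
  rw [map_add]; push_cast; exact this

lemma monomial' (s : σ →₀ ℕ) (c : k) (h : ((Finsupp.weight w s : ℕ) : ℤ) ∈ T) :
    SuppIn w T (monomial s c) := by
  classical
  intro t ht
  rw [coeff_monomial] at ht
  have : s = t := by by_contra h'; simp [h'] at ht
  exact this ▸ h

lemma C (c : k) : SuppIn w {0} (MvPolynomial.C c : MvPolynomial σ k) := by
  rw [← monomial_zero']
  exact monomial' _ _ (by simp)

lemma X (j : σ) : SuppIn w {(w j : ℤ)} (MvPolynomial.X j : MvPolynomial σ k) := by
  rw [MvPolynomial.X]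
  exact monomial' _ _ (by simp [Finsupp.weight_single])

lemma linear (L : MvPolynomial σ k →ₗ[k] MvPolynomial σ k)
    (hL : ∀ s c, ((Finsupp.weight w s : ℕ) : ℤ) ∈ T₁ → SuppIn w T₂ (L (monomial s c)))
    (ha : SuppIn w T₁ a) : SuppIn w T₂ (L a) := by
  rw [a.as_sum, map_sum]
  exact sum _ _ fun s hs => hL s _ (ha s (mem_support_iff.mp hs))

lemma eq_zero (h : SuppIn w T₁ a) (h' : SuppIn w T₂ a) (hT : ∀ x ∈ T₁, x ∉ T₂) : a = 0 := by
  ext s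
  by_contra hs
  exact hT _ (h s (by simpa using hs)) (h' s (by simpa using hs))

end SuppIn

/-- `b` is the degree `i` symbol of `a`. -/
def Symb (w : σ → ℕ) (i : ℤ) (a b : MvPolynomial σ k) : Prop :=
  SuppIn w {i} b ∧ SuppIn w (Iio i) (a - b)

namespace Symb

variable {w : σ → ℕ} {i j : ℤ} {a b a' b' : MvPolynomial σ k}

lemma le (h : Symb w i a a') : SuppIn w (Iic i) a := by
  have := (h.1.mono (T₂ := Iic i) (by simp)).add (h.2.mono Iio_subset_Iic_self)
  simpa using this

lemma zero : Symb w i (0 : MvPolynomial σ k) 0 := ⟨SuppIn.zero, by simpa using SuppIn.zero⟩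

lemma refl (h : SuppIn w {i} a) : Symb w i a a := ⟨h, by simpa using SuppIn.zero⟩

lemma add (h : Symb w i a a') (h' : Symb w i b b') : Symb w i (a + b) (a' + b') :=
  ⟨h.1.add h'.1, by rw [add_sub_add_comm]; exact h.2.add h'.2⟩

lemma mul (h : Symb w i a a') (h' : Symb w j b b') : Symb w (i + j) (a * b) (a' * b') := by
  refine ⟨h.1.mul h'.1 ?_, ?_⟩
  · rintro x rfl y rfl; rfl
  · have e : a * b - a' * b' = (a - a') * b + a' * (b - b') := by ring
    rw [e]
    refine (h.2.mul h'.le ?_).add (h.1.mul h'.2 ?_)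
    · intro x hx y hy; simp only [mem_Iio, mem_Iic] at *; omega
    · rintro x rfl y hy; simp only [mem_Iio] at *; omega

lemma unique (h : Symb w i a a') (h' : Symb w i a b') : a' = b' := by
  have h1 := h.1.sub h'.1
  have h2 := h'.2.sub h.2
  rw [sub_sub_sub_cancel_left] at h2
  exact sub_eq_zero.mp (h1.eq_zero h2 (by simp))

lemma exists_of_le (h : SuppIn w (Iic i) a) : ∃ a', Symb w i a a' := by
  classical
  refine ⟨∑ s ∈ a.support with ((Finsupp.weight w s : ℕ) : ℤ) = i, monomial s (coeff s a), ?_, ?_⟩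
  · refine SuppIn.sum _ _ fun s hs => SuppIn.monomial' _ _ ?_
    simpa using (Finset.mem_filter.mp hs).2
  · nth_rewrite 1 [a.as_sum]
    rw [← Finset.sum_filter_add_sum_filter_not a.support
      (fun s => ((Finsupp.weight w s : ℕ) : ℤ) = i), add_sub_cancel_left]
    refine SuppIn.sum _ _ fun s hs => SuppIn.monomial' _ _ ?_
    rw [Finset.mem_filter] at hs
    exact lt_of_le_of_ne (h s (mem_support_iff.mp hs.1)) hs.2

lemma deriv_monomial {d : ℤ} (P E : Derivation k (MvPolynomial σ k) (MvPolynomial σ k))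
    (h : ∀ j, Symb w (w j + d) (P (X j)) (E (X j))) (s : σ →₀ ℕ) :
    ∀ c, Symb w (((Finsupp.weight w s : ℕ) : ℤ) + d) (P (monomial s c)) (E (monomial s c)) := by
  have hC : ∀ c : k, Symb w 0 (C c : MvPolynomial σ k) (C c) := fun c =>
    refl (SuppIn.monomial' _ _ (by simp))
  have hadd : ∀ s t : σ →₀ ℕ,
      (∀ c, Symb w (((Finsupp.weight w s : ℕ) : ℤ) + d) (P (monomial s c)) (E (monomial s c))) →
      (∀ c, Symb w (((Finsupp.weight w t : ℕ) : ℤ) + d) (P (monomial t c)) (E (monomial t c))) →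
      (∀ c, Symb w (((Finsupp.weight w (s + t) : ℕ) : ℤ) + d) (P (monomial (s + t) c))
        (E (monomial (s + t) c))) := by
    intro s t hs ht c
    have e : monomial (s + t) c = monomial s c * monomial t (1 : k) := by
      rw [monomial_mul, mul_one]
    rw [e, Derivation.leibniz, Derivation.leibniz, map_add]
    simp only [smul_eq_mul]
    have r1 : Symb w ((Finsupp.weight w s : ℕ) : ℤ) (monomial s c) (monomial s c) :=
      refl (SuppIn.monomial' _ _ rfl)
    have r2 : Symb w ((Finsupp.weight w t : ℕ) : ℤ) (monomial t (1 : k)) (monomial t 1) :=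
      refl (SuppIn.monomial' _ _ rfl)
    have h1 := r1.mul (ht 1)
    have h2 := r2.mul (hs c)
    rw [← add_assoc] at h1
    rw [← add_assoc, add_comm ((Finsupp.weight w t : ℕ) : ℤ)] at h2
    push_cast
    exact h1.add h2
  have h0 : ∀ c, Symb w (((Finsupp.weight w (0 : σ →₀ ℕ) : ℕ) : ℤ) + d) (P (monomial 0 c))
      (E (monomial 0 c)) := by
    intro c
    have : (monomial 0 c : MvPolynomial σ k) = algebraMap k _ c := rfl
    rw [this, Derivation.map_algebraMap, Derivation.map_algebraMap]
    exact zero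
  induction s using Finsupp.induction_linear with
  | zero => exact h0
  | add s t hs ht => exact hadd s t hs ht
  | single j e =>
    induction e with
    | zero => rw [Finsupp.single_zero]; exact h0
    | succ e ih =>
      rw [Finsupp.single_add]
      refine hadd _ _ ih ?_
      intro c
      have e1 : monomial (Finsupp.single j 1) c = c • (X j : MvPolynomial σ k) := by
        rw [X, smul_monomial, smul_eq_mul, mul_one]
      rw [e1, Derivation.map_smul, Derivation.map_smul, smul_eq_C_mul, smul_eq_C_mul]
      have := (hC c).mul (h j)
      rw [zero_add] at this
      simpa [Finsupp.weight_single] using this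

lemma deriv {d : ℤ} (P E : Derivation k (MvPolynomial σ k) (MvPolynomial σ k))
    (h : ∀ j, Symb w (w j + d) (P (X j)) (E (X j))) (ha : Symb w i a a') :
    Symb w (i + d) (P a) (E a') := by
  refine ⟨?_, ?_⟩
  · refine SuppIn.linear (E : MvPolynomial σ k →ₗ[k] MvPolynomial σ k) ?_ ha.1
    rintro s c hs
    have := (deriv_monomial P E h s c).1
    rw [mem_singleton_iff.mp hs] at this
    exact this
  · have e : P a - E a' = P (a - a') + (P - E) a' := by
      rw [map_sub, Derivation.sub_apply]; ring
    rw [e]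
    refine SuppIn.add ?_ ?_
    · refine SuppIn.linear (P : MvPolynomial σ k →ₗ[k] MvPolynomial σ k) ?_ ha.2
      intro s c hs
      refine (deriv_monomial P E h s c).le.mono ?_
      intro x hx
      simp only [mem_Iio, mem_Iic] at *
      omega
    · refine SuppIn.linear
        ((P - E : Derivation k _ _) : MvPolynomial σ k →ₗ[k] MvPolynomial σ k) ?_ ha.1
      intro s c hs
      have := (deriv_monomial P E h s c).2
      rw [mem_singleton_iff.mp hs] at this
      exact this

/-- Symbols of multiples of `G` are multiples of the symbol of `G`. -/
lemma of_mul {G f r g' : MvPolynomial σ k} {m : ℤ} (hf : f ≠ 0) (hG : Symb w m G f)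
    (h : Symb w i (G * r) g') : ∃ r', Symb w (i - m) r r' ∧ g' = f * r' := by
  have key : ∀ N : ℕ, SuppIn w (Iic (i - m + N)) r → SuppIn w (Iic (i - m)) r := by
    intro N
    induction N with
    | zero => intro h; simpa using h
    | succ N ih =>
      intro hr
      apply ih
      obtain ⟨r', hr'⟩ := exists_of_le hr
      have h1 := hG.mul hr'
      have h2 := (h.le.mono (T₂ := Iio (m + (i - m + (N + 1 : ℕ)))) (by
        intro x hx; simp only [mem_Iio, mem_Iic] at *; push_cast; omega)).sub h1.2
      rw [sub_sub_cancel] at h2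
      have h3 := h1.1.eq_zero h2 (by simp)
      have h4 : r' = 0 := (mul_eq_zero.mp h3).resolve_left hf
      have h5 := hr'.2
      rw [h4, sub_zero] at h5
      refine h5.mono ?_
      intro x hx; simp only [mem_Iio, mem_Iic] at *; push_cast at hx; omega
  have hr : SuppIn w (Iic (i - m)) r := by
    obtain ⟨B, hB⟩ : ∃ B : ℕ, ∀ s ∈ r.support, (Finsupp.weight w s : ℕ) ≤ B :=
      ⟨r.support.sup fun s => Finsupp.weight w s, fun s hs =>
        Finset.le_sup (f := fun s => Finsupp.weight w s) hs⟩
    refine key (B + (i - m).natAbs) ?_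
    intro s hs
    have := hB s (mem_support_iff.mpr hs)
    have h2 := neg_abs_le (i - m)
    simp only [mem_Iic]; push_cast; omega
  obtain ⟨r', hr'⟩ := exists_of_le hr
  refine ⟨r', hr', ?_⟩
  have := hG.mul hr'
  rw [add_sub_cancel] at this
  exact h.unique this

end Symb

lemma lnd_mul {A : Type*} [CommRing A] (D : Derivation ℤ A A) : ∀ (N a b : ℕ) (x y : A),
    a + b = N → (⇑D)^[a] x = 0 → (⇑D)^[b] y = 0 → (⇑D)^[N] (x * y) = 0 := by
  intro N
  induction N with
  | zero =>
    intro a b x y h hx hy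
    obtain rfl : a = 0 := by omega
    simp at hx; simp [hx]
  | succ N ih =>
    intro a b x y h hx hy
    rcases a with _ | a
    · simp only [Function.iterate_zero, id] at hx
      rw [hx, zero_mul]; exact iterate_map_zero D _
    rcases b with _ | b
    · simp only [Function.iterate_zero, id] at hy
      rw [hy, mul_zero]; exact iterate_map_zero D _
    rw [Function.iterate_succ_apply, Derivation.leibniz, iterate_map_add, smul_eq_mul, smul_eq_mul,
      ih (a + 1) b x (D y) (by omega) hx (by simpa using hy),
      ih (b + 1) a y (D x) (by omega) hy (by simpa using hx), add_zero]

lemma lnd_top {A : Type*} [CommRing A] (D : Derivation ℤ A A) : ∀ (N a b : ℕ) (x y : A),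
    a + b = N → (⇑D)^[a + 1] x = 0 → (⇑D)^[b + 1] y = 0 →
    (⇑D)^[N] (x * y) = (N.choose a : A) * ((⇑D)^[a] x * (⇑D)^[b] y) := by
  intro N
  induction N with
  | zero =>
    intro a b x y h hx hy
    obtain rfl : a = 0 := by omega
    obtain rfl : b = 0 := by omega
    simp
  | succ N ih =>
    intro a b x y h hx hy
    rw [Function.iterate_succ_apply, Derivation.leibniz, iterate_map_add, smul_eq_mul, smul_eq_mul,
      mul_comm y]
    rcases a with _ | a
    · obtain rfl : b = N + 1 := by omega
      have hx' : D x = 0 := by simpa using hx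
      rw [ih 0 N x (D y) (by omega) hx (by simpa using hy), hx', zero_mul]
      simp [iterate_map_zero]
    rcases b with _ | b
    · obtain rfl : a = N := by omega
      have hy' : D y = 0 := by simpa using hy
      rw [ih a 0 (D x) y (by omega) (by simpa using hx) hy, hy', mul_zero]
      simp [iterate_map_zero]
    rw [ih (a + 1) b x (D y) (by omega) hx (by simpa using hy),
      ih a (b + 1) (D x) y (by omega) (by simpa using hx) hy, Nat.choose_succ_succ]
    simp only [Function.iterate_succ_apply]
    push_cast
    ring

/-- A locally nilpotent derivation of a domain of characteristic zero kills units. -/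
lemma lnd_unit {A : Type*} [CommRing A] [IsDomain A] [CharZero A] (D : Derivation ℤ A A)
    (hD : IsLND D) (u v : A) (huv : u * v = 1) : D u = 0 := by
  classical
  have key : ∀ x : A, x ≠ 0 → ∃ a, (⇑D)^[a] x ≠ 0 ∧ (⇑D)^[a + 1] x = 0 := by
    intro x hx
    have hex : ∃ n, (⇑D)^[n] x = 0 := let ⟨n, _, h⟩ := hD x; ⟨n, h⟩
    have h0 : Nat.find hex ≠ 0 := by
      intro h
      have := Nat.find_spec hex
      rw [h] at this
      exact hx this
    obtain ⟨a, ha⟩ := Nat.exists_eq_succ_of_ne_zero h0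
    refine ⟨a, Nat.find_min hex (by omega), ?_⟩
    have := Nat.find_spec hex
    rwa [ha] at this
  obtain ⟨a, ha, ha'⟩ := key u (left_ne_zero_of_mul_eq_one huv)
  obtain ⟨b, hb, hb'⟩ := key v (right_ne_zero_of_mul_eq_one huv)
  have h := lnd_top D (a + b) a b u v rfl ha' hb'
  have hne : ((a + b).choose a : A) * ((⇑D)^[a] u * (⇑D)^[b] v) ≠ 0 :=
    mul_ne_zero (by exact_mod_cast (Nat.choose_pos (Nat.le_add_right a b)).ne') (mul_ne_zero ha hb)
  rw [← h, huv] at hne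
  rcases a with _ | a
  · simpa using ha'
  · exfalso
    apply hne
    rw [show a + 1 + b = (a + b) + 1 by omega, Function.iterate_succ_apply,
      Derivation.map_one_eq_zero]
    exact iterate_map_zero D _

/-- A derivation preserving the kernel of a surjection descends to the image. -/
lemma exists_quot_deriv {A B : Type*} [CommRing A] [CommRing B] (π : A →+* B)
    (hπ : Function.Surjective π) (E : A →+ A)
    (hl : ∀ a b, E (a * b) = a * E b + b * E a)
    (hE : ∀ a, π a = 0 → π (E a) = 0) :
    ∃ D : Derivation ℤ B B, ∀ a, D (π a) = π (E a) := by
  have hwd : ∀ a b : A, π a = π b → π (E a) = π (E b) := by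
    intro a b h
    rw [← sub_eq_zero, ← map_sub] at h ⊢
    rw [← map_sub]; exact hE _ h
  choose q hq using hπ
  let g : B →+ B :=
    { toFun := fun x => π (E (q x))
      map_zero' := by
        rw [hwd (q 0) 0 (by rw [hq, map_zero]), map_zero, map_zero]
      map_add' := fun x y => by
        rw [hwd (q (x + y)) (q x + q y) (by rw [map_add, hq, hq, hq]), map_add, map_add] }
  refine ⟨Derivation.mk' g.toIntLinearMap ?_, ?_⟩
  · intro x y
    change π (E (q (x * y))) = x * π (E (q y)) + y * π (E (q x))
    rw [hwd (q (x * y)) (q x * q y) (by rw [map_mul, hq, hq, hq]), hl, map_add,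
      map_mul, map_mul, hq, hq]
  · intro a
    exact hwd _ _ (hq _)

lemma iter_quot {A B : Type*} (π : A → B) (E : A → A) (D : B → B)
    (h : ∀ a, D (π a) = π (E a)) (N : ℕ) (a : A) :
    D^[N] (π a) = π (E^[N] a) := by
  induction N generalizing a with
  | zero => rfl
  | succ N ih => rw [Function.iterate_succ_apply, h, ih, Function.iterate_succ_apply]

/-- Part (a). -/
lemma prime_sub_C [Finite σ] (w : σ → ℕ) (f : MvPolynomial σ k) (hf : Prime f) (m : ℕ)
    (hm : 0 < m) (hhom : f.IsWeightedHomogeneous w m) (c : k) : Prime (f - C c) := by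
  classical
  by_cases hc : c = 0
  · simpa [hc] using hf
  have hcu : IsUnit (C c : MvPolynomial σ k) := (isUnit_iff_ne_zero.mpr hc).map C
  have hfc : f ≠ 0 := hf.ne_zero
  -- Eisenstein
  set p : Polynomial (MvPolynomial σ k) :=
    Polynomial.C (-C c) * Polynomial.X ^ m + Polynomial.C f with hp
  have hcoef : ∀ i, p.coeff i = (if i = m then -C c else 0) + (if i = 0 then f else 0) := by
    intro i
    rw [hp, Polynomial.coeff_add, Polynomial.coeff_C_mul_X_pow, Polynomial.coeff_C]
  have hnc : (-C c : MvPolynomial σ k) ≠ 0 := neg_ne_zero.mpr hcu.ne_zero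
  have hdeg : p.natDegree = m := by
    rw [hp, Polynomial.natDegree_add_C, Polynomial.natDegree_C_mul_X_pow _ _ hnc]
  have hlead : p.leadingCoeff = -C c := by
    rw [Polynomial.leadingCoeff, hdeg, hcoef]; simp [hm.ne']
  have hp0 : p ≠ 0 := by
    intro h; rw [h] at hlead; simp at hlead; exact hc (by simpa using hlead)
  have hirr : Irreducible p := by
    have hP := Ideal.isPrime_span_singleton_of_prime hf
    refine Polynomial.irreducible_of_eisenstein_criterion hP ?_ ?_ ?_ ?_ ?_
    · rw [hlead]
      intro h
      exact hP.ne_top (Ideal.eq_top_of_isUnit_mem _ h hcu.neg)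
    · intro i hi
      rw [Polynomial.degree_eq_natDegree hp0, hdeg] at hi
      have hi' : i ≠ m := by
        have : i < m := by exact_mod_cast hi
        omega
      rw [hcoef, if_neg hi', zero_add]
      split_ifs
      · exact Ideal.mem_span_singleton_self f
      · exact Ideal.zero_mem _
    · exact Polynomial.natDegree_pos_iff_degree_pos.mp (by rw [hdeg]; exact hm)
    · rw [hcoef, if_neg hm.ne, if_pos rfl, zero_add, Ideal.span_singleton_pow,
        Ideal.mem_span_singleton]
      rintro ⟨t, ht⟩
      apply hf.not_isUnit
      have : f * 1 = f * (f * t) := by rw [mul_one]; rw [← mul_assoc, ← sq]; exact ht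
      exact IsUnit.of_mul_eq_one t (mul_left_cancel₀ hfc this).symm
    · intro r hr
      have := (Polynomial.C_dvd_iff_dvd_coeff r p).mp hr m
      rw [hcoef, if_pos rfl, if_neg hm.ne', add_zero] at this
      exact isUnit_of_dvd_unit this hcu.neg
  set q : Polynomial (MvPolynomial σ k) :=
    Polynomial.C f * Polynomial.X ^ m - Polynomial.C (C c) with hq
  have hqdeg : q.natDegree = m := by
    rw [hq, Polynomial.natDegree_sub_C, Polynomial.natDegree_C_mul_X_pow _ _ hfc]
  have hqp : q.reverse = p := by
    rw [Polynomial.reverse, hqdeg, hq, hp, Polynomial.reflect_sub, Polynomial.reflect_C_mul_X_pow,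
      Polynomial.reflect_C, Polynomial.revAt_le le_rfl]
    simp only [Nat.sub_self, pow_zero, mul_one, map_neg]
    ring
  have hq0 : q.coeff 0 = -C c := by
    simp [hq, Polynomial.coeff_X_pow, hm.ne]
  have hunit : ∀ g h : Polynomial (MvPolynomial σ k), q = g * h → IsUnit g.reverse → IsUnit g := by
    intro g h e hu
    have h0 : g.coeff 0 * h.coeff 0 = -C c := by rw [← hq0, e, Polynomial.mul_coeff_zero]
    have hg0 : IsUnit (g.coeff 0) := isUnit_of_dvd_unit (Dvd.intro _ h0) hcu.neg
    have ht : g.natTrailingDegree = 0 :=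
      Polynomial.natTrailingDegree_eq_zero.mpr (Or.inr hg0.ne_zero)
    have hd : g.natDegree = 0 := by
      have := g.natDegree_eq_reverse_natDegree_add_natTrailingDegree
      rw [ht, Polynomial.natDegree_eq_zero_of_isUnit hu] at this
      exact this
    rw [Polynomial.eq_C_of_natDegree_eq_zero hd]
    exact hg0.map Polynomial.C
  have hqirr : Irreducible q := by
    refine ⟨?_, ?_⟩
    · intro h
      have := Polynomial.natDegree_eq_zero_of_isUnit h
      omega
    · intro g h e
      have e2 : p = g.reverse * h.reverse := by
        rw [← hqp, e, Polynomial.reverse_mul_of_domain]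
      rcases hirr.isUnit_or_isUnit e2 with hu | hu
      · exact Or.inl (hunit g h e hu)
      · exact Or.inr (hunit h g (by rw [e, mul_comm]) hu)
  have hqprime : Prime q := hqirr.prime
  -- the homogenization map
  let φ : MvPolynomial σ k →ₐ[k] Polynomial (MvPolynomial σ k) :=
    aeval fun i => Polynomial.C (X i) * Polynomial.X ^ w i
  have hmon : ∀ s (a : k), φ (monomial s a) =
      Polynomial.C (monomial s a) * Polynomial.X ^ (Finsupp.weight w s) := by
    intro s a
    rw [aeval_monomial, Finsupp.weight_apply, monomial_eq (a := a)]
    simp only [mul_pow, map_mul, Finsupp.prod, Finsupp.sum, map_prod, map_pow,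
      ← Finset.prod_pow_eq_pow_sum, smul_eq_mul, mul_assoc]
    have e1 : (algebraMap k (Polynomial (MvPolynomial σ k))) a = Polynomial.C (C a) := rfl
    have e2 : ∀ i, ((Polynomial.X : Polynomial (MvPolynomial σ k)) ^ w i) ^ s i =
        Polynomial.X ^ (s i * w i) := fun i => by rw [← pow_mul, mul_comm]
    simp only [Finset.prod_mul_distrib, e1, e2]
  have hφf : φ f = Polynomial.C f * Polynomial.X ^ m := by
    conv_lhs => rw [f.as_sum]
    conv_rhs => rw [f.as_sum]
    rw [map_sum, map_sum, Finset.sum_mul]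
    refine Finset.sum_congr rfl fun s hs => ?_
    rw [hmon, hhom (mem_support_iff.mp hs)]
  have hφ : φ (f - C c) = q := by
    rw [map_sub, hφf, hq]
    congr 1
    exact φ.commutes c
  have hev : ∀ a, (φ a).eval 1 = a := by
    intro a
    have : ((Polynomial.evalRingHom (1 : MvPolynomial σ k)).comp (φ : _ →+* _)) = RingHom.id _ := by
      apply MvPolynomial.ringHom_ext
      · intro r
        have : φ (C r) = Polynomial.C (C r) := φ.commutes r
        simp [this]
      · intro i
        simp [φ]
    exact congrArg (fun g : _ →+* _ => g a) this
  have hback : ∀ a, q ∣ φ a → f - C c ∣ a := by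
    rintro a ⟨t, ht⟩
    refine ⟨t.eval 1, ?_⟩
    rw [← hev a, ht, Polynomial.eval_mul, ← hφ, hev]
  refine ⟨?_, ?_, ?_⟩
  · intro h
    apply hqprime.ne_zero
    rw [← hφ, h, map_zero]
  · intro h
    apply hqprime.not_isUnit
    rw [← hφ]; exact h.map φ
  · rintro a b ⟨t, ht⟩
    have : q ∣ φ a * φ b := ⟨φ t, by rw [← map_mul, ht, map_mul, hφ]⟩
    exact (hqprime.dvd_or_dvd this).imp (hback a) (hback b)

/-- The descent step of part (b). -/
lemma descent_step (w : σ → ℕ) (f : MvPolynomial σ k) (hf : Prime f) (m : ℕ)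
    (hm : 0 < m) (hhom : f.IsWeightedHomogeneous w m) (c : k)
    {B₀ B₁ : Type*} [CommRing B₀] [CommRing B₁]
    (π₀ : MvPolynomial σ k →+* B₀) (h₀ : Function.Surjective π₀) (hk₀ : ∀ a, π₀ a = 0 ↔ f ∣ a)
    (π₁ : MvPolynomial σ k →+* B₁) (hk₁ : ∀ a, π₁ a = 0 ↔ f - C c ∣ a)
    (hrig : ∀ D : Derivation ℤ B₀ B₀, IsLND D → D = 0)
    (D : Derivation ℤ B₁ B₁) (hD : IsLND D)
    (hDC : ∀ a : k, D (π₁ (C a)) = 0) (d : ℤ)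
    (h : ∃ P : σ → MvPolynomial σ k, ∀ j, SuppIn w (Iic (w j + d)) (P j) ∧
      D (π₁ (X j)) = π₁ (P j)) :
    ∃ P : σ → MvPolynomial σ k, ∀ j, SuppIn w (Iic (w j + (d - 1))) (P j) ∧
      D (π₁ (X j)) = π₁ (P j) := by
  obtain ⟨P, hP⟩ := h
  choose Q hQ using fun j => Symb.exists_of_le (hP j).1
  have hfH : SuppIn w {(m : ℤ)} f := fun s hs => by
    rw [mem_singleton_iff, hhom hs]
  have hG : Symb w m (f - C c) f := by
    refine ⟨hfH, ?_⟩
    have : f - C c - f = - C c := by ring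
    rw [this]
    refine (SuppIn.C c).neg.mono ?_
    simpa using hm
  obtain ⟨DP, hDP⟩ : ∃ DP : Derivation k (MvPolynomial σ k) (MvPolynomial σ k),
      ∀ j, DP (X j) = P j := ⟨mkDerivation k P, mkDerivation_X k P⟩
  obtain ⟨DE, hDE⟩ : ∃ DE : Derivation k (MvPolynomial σ k) (MvPolynomial σ k),
      ∀ j, DE (X j) = Q j := ⟨mkDerivation k Q, mkDerivation_X k Q⟩
  have hX : ∀ j, Symb w (w j + d) (DP (X j)) (DE (X j)) := by
    intro j
    rw [hDP, hDE]
    exact hQ j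
  have hlift : ∀ a, D (π₁ a) = π₁ (DP a) := by
    intro a
    induction a using MvPolynomial.induction_on with
    | C a =>
      have : DP (C a) = 0 := DP.map_algebraMap a
      rw [hDC, this, map_zero]
    | add p q hp hq => simp only [map_add, hp, hq]
    | mul_X p j hp =>
      rw [map_mul, Derivation.leibniz, Derivation.leibniz, hp, (hP j).2]
      simp only [smul_eq_mul, map_add, map_mul, hDP]
  have hsymb : ∀ i g g', (f - C c) ∣ g → Symb w i g g' → f ∣ g' := by
    rintro i g g' ⟨r, rfl⟩ hs
    obtain ⟨r', _, hr'⟩ := Symb.of_mul hf.ne_zero hG hs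
    exact ⟨r', hr'⟩
  have hEf : f ∣ DE f := by
    refine hsymb (m + d) (DP (f - C c)) _ ?_ (Symb.deriv DP DE hX hG)
    rw [← hk₁, ← hlift, (hk₁ _).mpr dvd_rfl, map_zero]
  obtain ⟨Db, hDb⟩ := exists_quot_deriv π₀ h₀ 
    (DE : MvPolynomial σ k →ₗ[k] MvPolynomial σ k).toAddMonoidHom (fun a b => DE.leibniz a b) (by
    intro a ha
    rw [hk₀] at ha ⊢
    obtain ⟨t, rfl⟩ := ha
    change f ∣ DE (f * t)
    rw [Derivation.leibniz, smul_eq_mul, smul_eq_mul]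
    exact dvd_add (dvd_mul_right _ _) (hEf.mul_left _))
  have hDb' : ∀ a, Db (π₀ a) = π₀ (DE a) := hDb
  have hLND : IsLND Db := by
    have hle : ∀ (N M : ℕ) x, N ≤ M → (⇑Db)^[N] x = 0 → (⇑Db)^[M] x = 0 := by
      intro N M x hNM hx
      obtain ⟨t, rfl⟩ := Nat.exists_eq_add_of_le hNM
      rw [add_comm, Function.iterate_add_apply, hx]
      exact iterate_map_zero Db _
    have hnil : ∀ a, ∃ N, (⇑Db)^[N] (π₀ a) = 0 := by
      intro a
      induction a using MvPolynomial.induction_on with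
      | C a =>
        refine ⟨1, ?_⟩
        have : DE (C a) = 0 := DE.map_algebraMap a
        rw [Function.iterate_one, hDb', this, map_zero]
      | add p q hp hq =>
        obtain ⟨N, hN⟩ := hp
        obtain ⟨M, hM⟩ := hq
        refine ⟨N + M, ?_⟩
        rw [map_add, iterate_map_add, hle _ _ _ (Nat.le_add_right N M) hN,
          hle _ _ _ (Nat.le_add_left M N) hM, add_zero]
      | mul_X p j hp =>
        obtain ⟨N, hN⟩ := hp
        obtain ⟨M, _, hM⟩ := hD (π₁ (X j))
        refine ⟨N + M, ?_⟩
        rw [map_mul]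
        refine lnd_mul Db _ N M _ _ rfl hN ?_
        refine (iter_quot _ _ _ hDb' M (X j)).trans ?_
        rw [hk₀]
        rw [iter_quot _ _ _ hlift, hk₁] at hM
        have hs : ∀ M : ℕ, Symb w (w j + M * d) ((⇑DP)^[M] (X j)) ((⇑DE)^[M] (X j)) := by
          intro M
          induction M with
          | zero =>
            simp only [Function.iterate_zero, id, Nat.cast_zero, zero_mul, add_zero]
            exact Symb.refl (SuppIn.X j)
          | succ M ih =>
            rw [Function.iterate_succ_apply', Function.iterate_succ_apply']
            have := Symb.deriv DP DE hX ih
            have e : (w j : ℤ) + (M + 1 : ℕ) * d = w j + M * d + d := by push_cast; ring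
            rw [e]; exact this
        exact hsymb _ _ _ hM (hs M)
    intro b
    obtain ⟨a, rfl⟩ := h₀ b
    obtain ⟨N, hN⟩ := hnil a
    exact ⟨N + 1, by omega, hle _ _ _ (by omega) hN⟩
  have hz := hrig Db hLND
  have hQf : ∀ j, ∃ s, SuppIn w {w j + d - (m : ℤ)} s ∧ Q j = f * s := by
    intro j
    have h1 : f ∣ Q j := by
      have := hDb' (X j)
      rw [hz, Derivation.zero_apply, eq_comm, hk₀] at this
      rwa [hDE] at this
    obtain ⟨r, hr⟩ := h1
    obtain ⟨r', h1, h2⟩ := Symb.of_mul (r := r) (i := w j + d) (g' := Q j) hf.ne_zero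
      (Symb.refl hfH) (by rw [← hr]; exact Symb.refl (hQ j).1)
    exact ⟨r', h1.1, h2⟩
  choose s hs hs' using hQf
  refine ⟨fun j => P j - (f - C c) * s j, fun j => ⟨?_, ?_⟩⟩
  · have e : P j - (f - C c) * s j = (P j - Q j) + C c * s j := by rw [hs' j]; ring
    show SuppIn w _ (P j - (f - C c) * s j)
    rw [e]
    refine SuppIn.add ((hQ j).2.mono ?_) ?_
    · intro x hx; simp only [mem_Iio, mem_Iic] at *; omega
    · refine SuppIn.mul (T₁ := {0}) (SuppIn.C c) (hs j) ?_
      rintro x rfl y rfl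
      simp only [mem_Iic]; omega
  · rw [(hP j).2, ← sub_eq_zero, ← map_sub, hk₁]
    exact ⟨s j, by ring⟩

lemma rigid_fiber [CharZero k] [Finite σ] (w : σ → ℕ) (f : MvPolynomial σ k) (hf : Prime f) (m : ℕ)
    (hm : 0 < m) (hhom : f.IsWeightedHomogeneous w m) (c : k)
    {B₀ B₁ : Type*} [CommRing B₀] [CommRing B₁] [IsDomain B₁]
    (π₀ : MvPolynomial σ k →+* B₀) (h₀ : Function.Surjective π₀) (hk₀ : ∀ a, π₀ a = 0 ↔ f ∣ a)
    (π₁ : MvPolynomial σ k →+* B₁) (h₁ : Function.Surjective π₁)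
    (hk₁ : ∀ a, π₁ a = 0 ↔ f - C c ∣ a)
    (hrig : ∀ D : Derivation ℤ B₀ B₀, IsLND D → D = 0)
    (D : Derivation ℤ B₁ B₁) (hD : IsLND D) : D = 0 := by
  classical
  have := Fintype.ofFinite σ
  let ι : k →+* B₁ := π₁.comp C
  have hchar : CharZero B₁ :=
    charZero_of_injective_ringHom ι.injective
  have hDC : ∀ a : k, D (π₁ (C a)) = 0 := by
    intro a
    by_cases ha : a = 0
    · rw [ha, map_zero, map_zero, map_zero]
    · refine lnd_unit D hD (ι a) (ι a⁻¹) ?_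
      rw [← map_mul, mul_inv_cancel₀ ha, map_one]
  have hdesc : ∀ N : ℕ, ∀ d : ℤ,
      (∃ P : σ → MvPolynomial σ k, ∀ j, SuppIn w (Iic (w j + d)) (P j) ∧
        D (π₁ (X j)) = π₁ (P j)) →
      ∃ P : σ → MvPolynomial σ k, ∀ j, SuppIn w (Iic (w j + (d - N))) (P j) ∧
        D (π₁ (X j)) = π₁ (P j) := by
    intro N
    induction N with
    | zero => intro d h; simpa using h
    | succ N ih =>
      intro d h
      have := descent_step w f hf m hm hhom c π₀ h₀ hk₀ π₁ hk₁ hrig D hD hDC _ (ih d h)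
      have e : d - ((N + 1 : ℕ) : ℤ) = d - N - 1 := by push_cast; ring
      rw [e]; exact this
  choose P0 hP0 using fun j : σ => h₁ (D (π₁ (X j)))
  obtain ⟨B, hB⟩ : ∃ B : ℕ, ∀ j, ∀ s ∈ (P0 j).support, (Finsupp.weight w s : ℕ) ≤ B := by
    refine ⟨Finset.univ.sup fun j => (P0 j).support.sup fun s => Finsupp.weight w s, ?_⟩
    intro j s hs
    exact (Finset.le_sup (f := fun s => Finsupp.weight w s) hs).trans
      (Finset.le_sup (f := fun j => (P0 j).support.sup fun s => Finsupp.weight w s)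
        (Finset.mem_univ j))
  obtain ⟨W, hW⟩ : ∃ W : ℕ, ∀ j, w j ≤ W :=
    ⟨Finset.univ.sup w, fun j => Finset.le_sup (Finset.mem_univ j)⟩
  obtain ⟨P, hP⟩ := hdesc (B + W + 1) B ⟨P0, fun j => ⟨fun s hs => by
    have := hB j s (mem_support_iff.mpr hs)
    simp only [mem_Iic]; omega, (hP0 j).symm⟩⟩
  have hX : ∀ j, D (π₁ (X j)) = 0 := by
    intro j
    have h0 : P j = 0 := by
      refine (hP j).1.eq_zero (T₂ := Ici 0) (fun s _ => by simp) ?_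
      intro x hx
      have := hW j
      simp only [mem_Iic, mem_Ici] at *
      push_cast at hx
      omega
    rw [(hP j).2, h0, map_zero]
  ext b
  obtain ⟨a, rfl⟩ := h₁ b
  rw [Derivation.zero_apply]
  induction a using MvPolynomial.induction_on with
  | C a => exact hDC a
  | add p q hp hq => rw [map_add, map_add, hp, hq, add_zero]
  | mul_X p j hp => rw [map_mul, Derivation.leibniz, hp, hX, smul_zero, smul_zero, add_zero]

end Helpers

/-- Let k be a field of characteristic 0 and R = k[X₁,…,Xₙ] (n ≥ 2) equipped with an
ℕ-grading in which each variable is homogeneous (equivalently, the grading given by a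
weight function w : Fin n → ℕ) such that X₁ (the variable of index 0) has positive
degree.  Let f be a homogeneous prime element of R with f ∉ R₀[X₁].  Then:
(a) R/(f − c)R is an integral domain for every c ∈ k;
(b) if R/fR is rigid then R/(f − c)R is rigid for every c ∈ k. -/
theorem fibers_of_homogeneous_polynomial
    {k : Type*} [Field k] [CharZero k]
    (n : ℕ) [NeZero n] (hn : 2 ≤ n)
    (w : Fin n → ℕ) (hw : 0 < w 0)
    (f : MvPolynomial (Fin n) k) (hf : Prime f)
    (hfhom : ∃ m : ℕ, f.IsWeightedHomogeneous w m)
    (hfnot : f ∉ Subring.closure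
      ((weightedHomogeneousSubmodule k w 0 : Set (MvPolynomial (Fin n) k)) ∪ {X 0})) :
    (∀ c : k, IsDomain
      (MvPolynomial (Fin n) k ⧸ Ideal.span {f - C c})) ∧
    ((∀ D : Derivation ℤ (MvPolynomial (Fin n) k ⧸ Ideal.span {f})
        (MvPolynomial (Fin n) k ⧸ Ideal.span {f}), IsLND D → D = 0) →
      ∀ c : k, ∀ D : Derivation ℤ (MvPolynomial (Fin n) k ⧸ Ideal.span {f - C c})
        (MvPolynomial (Fin n) k ⧸ Ideal.span {f - C c}), IsLND D → D = 0) := by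
  obtain ⟨m, hm⟩ := hfhom
  have hm0 : 0 < m := by
    rcases Nat.eq_zero_or_pos m with rfl | h
    · exfalso
      apply hfnot
      apply Subring.subset_closure
      left
      exact hm
    · exact h
  have hdom : ∀ c : k, IsDomain (MvPolynomial (Fin n) k ⧸ Ideal.span {f - C c}) := by
    intro c
    have := Ideal.isPrime_span_singleton_of_prime (prime_sub_C w f hf m hm0 hm c)
    exact Ideal.Quotient.isDomain _
  refine ⟨hdom, fun hrig c D hD => ?_⟩
  have := hdom c
  exact rigid_fiber w f hf m hm0 hm c (Ideal.Quotient.mk (Ideal.span {f}))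
    Ideal.Quotient.mk_surjective
    (fun a => by rw [Ideal.Quotient.eq_zero_iff_mem, Ideal.mem_span_singleton])
    (Ideal.Quotient.mk (Ideal.span {f - C c})) Ideal.Quotient.mk_surjective
    (fun a => by rw [Ideal.Quotient.eq_zero_iff_mem, Ideal.mem_span_singleton])
    hrig D hD
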